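/- arXiv:2501.18396 — 2 statements merged into one kernel-verified Lean document; each statement's English description precedes it below -/
import Mathlib

section
/- Fix a prime p and an integer n ≥ 2. G := GL_n(ℚ_p) is the group of invertible n×n matrices over ℚ_p. B ≤ G is the subgroup of invertible upper triangular matrices, N the group of upper triangular unipotent matrices (1 on the diagonal, 0 below), N₀ := N ∩ GL_n(ℤ_p), T the group of invertible diagonal matrices, T₊ := {t ∈ T : tN₀t⁻¹ ⊆ N₀}, and w₀ the permutation matrix of the involution i ↦ n+1−i. For a permutation matrix w put N_{0,w₀⁻¹w⁻¹} := N₀ ∩ w₀⁻¹w⁻¹N₀ww₀ and U_w := (N₀w₀B) ∖ (w₀⁻¹w⁻¹NwB), a right B-stable subset of G. Then for every u ∈ N_{0,w₀⁻¹w⁻¹} and every t ∈ T₊, setting b := ut, one has U_w ∩ b·(N₀w₀B) = b·U_w (as subsets of G). -/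
open scoped Pointwise

/-! Write `C = N₀w₀B`, `D = w₀⁻¹w⁻¹NwB` and `b = ut`. The torus `T` normalizes `N`, is normalized by
`w` and `w₀`, and lies in `B`. So left translation by `t ∈ T₊` maps `C` into itself, and every
element of `T` stabilizes `D`. Likewise `u ∈ N₀` maps `C` into itself, and `u ∈ w₀⁻¹w⁻¹Nww₀`
stabilizes `D`. Hence `bC ⊆ C` and `bD = D`, so `b(C ∖ D) = bC ∖ D = (C ∖ D) ∩ bC`. -/

section GroupAction

open MulAction

variable {G α : Type*} [Group G] [MulAction G α]

theorem sdiff_inter_smul_eq_smul_sdiff {b : G} {C D : Set α} (hC : b • C ⊆ C)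
    (hD : b ∈ stabilizer G D) : (C \ D) ∩ b • C = b • (C \ D) := by
  rw [Set.smul_set_sdiff, mem_stabilizer_iff.1 hD, ← Set.inter_sdiff_right_comm,
    Set.inter_eq_right.2 hC]

theorem le_stabilizer_of_smul_subset {H : Subgroup G} {S : Set α}
    (h : ∀ g ∈ H, g • S ⊆ S) : H ≤ stabilizer G S := fun g hg ↦
  (h g hg).antisymm (Set.subset_smul_set_iff.2 (h g⁻¹ (H.inv_mem hg)))

theorem mem_stabilizer_smul_iff {g v : G} {x : α} :
    g ∈ stabilizer G (v • x) ↔ v⁻¹ * g * v ∈ stabilizer G x := by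
  rw [mem_stabilizer_iff, mem_stabilizer_iff, mul_smul, mul_smul, inv_smul_eq_iff]

end GroupAction

section DoubleCoset

open MulAction DoubleCoset

variable {G : Type*} [Group G] {M : Submonoid G} {N T : Subgroup G} {a g : G}

theorem smul_doubleCoset_subset_of_mem (hg : g ∈ M) (a : G) (S : Set G) :
    g • doubleCoset a M S ⊆ doubleCoset a M S := by
  rintro _ ⟨_, hx, rfl⟩
  obtain ⟨m, hm, s, hs, rfl⟩ := mem_doubleCoset.1 hx
  exact mem_doubleCoset.2 ⟨g * m, M.mul_mem hg hm, s, hs, by simp only [smul_eq_mul, mul_assoc]⟩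

theorem smul_doubleCoset_subset_of_conj_mem {S : Set G} (hS : ∀ x ∈ S, g * x * g⁻¹ ∈ S)
    (ha : a⁻¹ * g * a ∈ M) : g • doubleCoset a S M ⊆ doubleCoset a S M := by
  rintro _ ⟨_, hx, rfl⟩
  obtain ⟨s, hs, m, hm, rfl⟩ := mem_doubleCoset.1 hx
  exact mem_doubleCoset.2
    ⟨g * s * g⁻¹, hS s hs, a⁻¹ * g * a * m, M.mul_mem ha hm, by
      change g * (s * a * m) = _
      group⟩

theorem le_stabilizer_doubleCoset (N : Subgroup G) (a : G) (S : Set G) :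
    N ≤ stabilizer G (doubleCoset a N S) :=
  le_stabilizer_of_smul_subset fun _ hg ↦
    smul_doubleCoset_subset_of_mem (M := N.toSubmonoid) hg a S

theorem le_stabilizer_doubleCoset_of_le_normalizer (hTN : T ≤ Subgroup.normalizer (N : Set G))
    (ha : a ∈ Subgroup.normalizer (T : Set G)) (hTM : T.toSubmonoid ≤ M) :
    T ≤ stabilizer G (doubleCoset a N M) :=
  le_stabilizer_of_smul_subset fun _ ht ↦
    smul_doubleCoset_subset_of_conj_mem (fun x ↦ (Subgroup.mem_normalizer_iff.1 (hTN ht) x).1)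
      (hTM ((Subgroup.mem_normalizer_iff''.1 ha _).1 ht))

theorem doubleCoset_sdiff_smul_doubleCoset_inter_smul {N₀ : Submonoid G} {v w w₀ u t : G}
    (hTN : T ≤ Subgroup.normalizer (N : Set G)) (hTM : T.toSubmonoid ≤ M)
    (hv : v ∈ Subgroup.normalizer (T : Set G)) (hw : w ∈ Subgroup.normalizer (T : Set G))
    (hw₀ : w₀ ∈ Subgroup.normalizer (T : Set G))
    (hu : u ∈ N₀) (huN : v⁻¹ * u * v ∈ N) (ht : t ∈ T) (htN₀ : ∀ x ∈ N₀, t * x * t⁻¹ ∈ N₀) :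
    (doubleCoset w₀ N₀ M \ v • doubleCoset w N M) ∩ (u * t) • doubleCoset w₀ N₀ M =
      (u * t) • (doubleCoset w₀ N₀ M \ v • doubleCoset w N M) := by
  have conj_mem {x : G} (hx : x ∈ Subgroup.normalizer (T : Set G)) : x⁻¹ * t * x ∈ T :=
    (Subgroup.mem_normalizer_iff''.1 hx t).1 ht
  apply sdiff_inter_smul_eq_smul_sdiff
  · calc (u * t) • doubleCoset w₀ N₀ M
        = u • t • doubleCoset w₀ N₀ M := mul_smul ..
      _ ⊆ u • doubleCoset w₀ N₀ M := Set.smul_set_mono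
          (smul_doubleCoset_subset_of_conj_mem htN₀ (hTM (conj_mem hw₀)))
      _ ⊆ doubleCoset w₀ N₀ M := smul_doubleCoset_subset_of_mem hu ..
  · exact mul_mem (mem_stabilizer_smul_iff.2 (le_stabilizer_doubleCoset N w M huN))
      (mem_stabilizer_smul_iff.2
        (le_stabilizer_doubleCoset_of_le_normalizer hTN hw hTM (conj_mem hv)))

end DoubleCoset

section Diagonal

open Matrix

variable {ι K : Type*} [Fintype ι] [DecidableEq ι] [CommRing K]

variable (ι K) in
/-- The torus `T` of invertible diagonal matrices, as a subgroup of `GL ι K`. -/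
def diagonalGL : Subgroup (GL ι K) where
  carrier := {g | (g : Matrix ι ι K).IsDiag}
  one_mem' := isDiag_one
  mul_mem' {g h} hg hh := by
    rw [Set.mem_ofPred_eq, Units.val_mul, ← hg.diagonal_diag, ← hh.diagonal_diag,
      diagonal_mul_diagonal]
    exact isDiag_diagonal _
  inv_mem' {g} hg := by
    rw [Set.mem_ofPred_eq, coe_units_inv, ← hg.diagonal_diag, inv_diagonal]
    exact isDiag_diagonal _

theorem mem_diagonalGL {g : GL ι K} : g ∈ diagonalGL ι K ↔ (g : Matrix ι ι K).IsDiag := Iff.rfl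

theorem coe_conj_submatrix_eq_of_perm {w : GL ι K} {σ : Equiv.Perm ι}
    (hw : ∀ i j, (w : Matrix ι ι K) i j = if i = σ j then 1 else 0) (g : GL ι K) :
    ((w * g * w⁻¹ : GL ι K) : Matrix ι ι K).submatrix σ σ = g := by
  have hconj : ((w * g * w⁻¹ : GL ι K) : Matrix ι ι K) * w = w * g := by
    rw [← Units.val_mul, inv_mul_cancel_right, Units.val_mul]
  ext i j
  simpa [mul_apply, hw] using congr_fun₂ hconj (σ i) j

theorem mem_normalizer_diagonalGL_of_perm {w : GL ι K} {σ : Equiv.Perm ι}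
    (hw : ∀ i j, (w : Matrix ι ι K) i j = if i = σ j then 1 else 0) :
    w ∈ Subgroup.normalizer (diagonalGL ι K : Set (GL ι K)) := by
  refine Subgroup.mem_normalizer_iff.2 fun t ↦ ?_
  have hsub := coe_conj_submatrix_eq_of_perm hw t
  rw [mem_diagonalGL, mem_diagonalGL]
  refine ⟨fun h ↦ ?_, fun h ↦ hsub ▸ h.submatrix σ.injective⟩
  rw [← hsub] at h
  simpa using h.submatrix σ.symm.injective

end Diagonal

section Triangular

open Matrix

variable {ι K : Type*} [Fintype ι] [LinearOrder ι]

theorem mul_apply_self_of_isUpperTriangular [NonUnitalNonAssocSemiring K] {A B : Matrix ι ι K}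
    (hA : A.IsUpperTriangular) (hB : B.IsUpperTriangular) (i : ι) :
    (A * B) i i = A i i * B i i := by
  rw [mul_apply]
  refine Fintype.sum_eq_single i fun k hk ↦ ?_
  rcases hk.lt_or_gt with hki | hik
  · rw [hA hki, zero_mul]
  · rw [hB hik, mul_zero]

variable [CommRing K]

variable (ι K) in
/-- The Borel subgroup `B` of invertible upper triangular matrices in `GL ι K`. -/
def upperTriangularGL : Subgroup (GL ι K) where
  carrier := {g | (g : Matrix ι ι K).IsUpperTriangular}
  one_mem' := blockTriangular_one
  mul_mem' := BlockTriangular.mul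
  inv_mem' {g} hg := by
    have := g.invertible
    rw [Set.mem_ofPred_eq, coe_units_inv]
    exact blockTriangular_inv_of_blockTriangular hg

theorem apply_self_mul_inv_apply_self {g : GL ι K} (hg : g ∈ upperTriangularGL ι K) (i : ι) :
    (g : Matrix ι ι K) i i * ((g⁻¹ : GL ι K) : Matrix ι ι K) i i = 1 := by
  rw [← mul_apply_self_of_isUpperTriangular hg (inv_mem hg), ← Units.val_mul, mul_inv_cancel,
    Units.val_one, one_apply_eq]

variable (ι K) in
/-- The subgroup `N` of upper triangular matrices in `GL ι K` with all diagonal entries `1`. -/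
def upperUnitriangularGL : Subgroup (GL ι K) where
  carrier := {g | g ∈ upperTriangularGL ι K ∧ ∀ i, (g : Matrix ι ι K) i i = 1}
  one_mem' := ⟨one_mem _, fun i ↦ one_apply_eq i⟩
  mul_mem' {g h} hg hh := ⟨mul_mem hg.1 hh.1, fun i ↦ by
    rw [Units.val_mul, mul_apply_self_of_isUpperTriangular hg.1 hh.1, hg.2, hh.2, one_mul]⟩
  inv_mem' {g} hg := ⟨inv_mem hg.1, fun i ↦ by
    rw [← apply_self_mul_inv_apply_self hg.1 i, hg.2, one_mul]⟩

variable (ι) in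
/-- The upper unitriangular matrices in `GL ι K` with entries in `R`; this is `N₀` for
`R = ℤ_p ⊆ ℚ_p = K`. As `R` need not be closed under negation, it is only a submonoid. -/
def integralUnitriangularGL (R : Subsemiring K) : Submonoid (GL ι K) :=
  (upperUnitriangularGL ι K).toSubmonoid ⊓ R.matrix.toSubmonoid.comap (Units.coeHom _)

theorem diagonalGL_le_upperTriangularGL : diagonalGL ι K ≤ upperTriangularGL ι K :=
  fun _ hg _ _ hij ↦ hg hij.ne'

theorem upperTriangularGL_le_normalizer_upperUnitriangularGL :
    upperTriangularGL ι K ≤ Subgroup.normalizer (upperUnitriangularGL ι K : Set (GL ι K)) := by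
  refine Subgroup.le_normalizer_iff.2 fun b hb x hx ↦
    ⟨mul_mem (mul_mem hb hx.1) (inv_mem hb), fun i ↦ ?_⟩
  rw [Units.val_mul, mul_apply_self_of_isUpperTriangular (mul_mem hb hx.1) (inv_mem hb),
    Units.val_mul, mul_apply_self_of_isUpperTriangular hb hx.1, hx.2, mul_one,
    apply_self_mul_inv_apply_self hb]

open DoubleCoset in
theorem stmt5_general (R : Subsemiring K) {w w₀ u t : GL ι K}
    (hw : w ∈ Subgroup.normalizer (diagonalGL ι K : Set (GL ι K)))
    (hw₀ : w₀ ∈ Subgroup.normalizer (diagonalGL ι K : Set (GL ι K)))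
    (hu : u ∈ integralUnitriangularGL ι R)
    (hu_conj : u ∈ (fun x ↦ (w₀⁻¹ * w⁻¹) * x * (w * w₀)) '' upperUnitriangularGL ι K)
    (ht : t ∈ diagonalGL ι K)
    (ht_conj : ∀ x ∈ integralUnitriangularGL ι R, t * x * t⁻¹ ∈ integralUnitriangularGL ι R) :
    let C : Set (GL ι K) := doubleCoset w₀ (integralUnitriangularGL ι R) (upperTriangularGL ι K)
    let D : Set (GL ι K) := doubleCoset w (upperUnitriangularGL ι K) (upperTriangularGL ι K)
    let Uw := C \ ({w₀⁻¹ * w⁻¹} * D)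
    Uw ∩ ({u * t} * C) = {u * t} * Uw := by
  have hu_conj' : (w₀⁻¹ * w⁻¹)⁻¹ * u * (w₀⁻¹ * w⁻¹) ∈ upperUnitriangularGL ι K := by
    obtain ⟨x, hx, rfl⟩ := hu_conj
    simpa [mul_assoc] using hx
  simp only [← smul_eq_mul (a := ({_} : Set (GL ι K))), Set.singleton_smul]
  exact doubleCoset_sdiff_smul_doubleCoset_inter_smul (M := (upperTriangularGL ι K).toSubmonoid)
    (diagonalGL_le_upperTriangularGL.trans upperTriangularGL_le_normalizer_upperUnitriangularGL)
    diagonalGL_le_upperTriangularGL (mul_mem (inv_mem hw₀) (inv_mem hw)) hw hw₀ hu hu_conj' ht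
    ht_conj

end Triangular

set_option maxHeartbeats 1000000 in
set_option synthInstance.maxHeartbeats 200000 in
/-- Fix a prime `p` and `n ≥ 2`.  In `G = GL_n(ℚ_p)` let `B` be the invertible upper triangular
matrices, `N` the upper triangular unipotent matrices, `N₀ = N ∩ GL_n(ℤ_p)`, `T` the invertible
diagonal matrices, `T₊ = {t ∈ T : tN₀t⁻¹ ⊆ N₀}`, `w₀` the permutation matrix of `i ↦ n+1-i`
and `w` any permutation matrix.  With `N_{0,w₀⁻¹w⁻¹} = N₀ ∩ w₀⁻¹w⁻¹N₀ww₀` and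
`U_w = (N₀w₀B) ∖ (w₀⁻¹w⁻¹NwB)`, for every `u ∈ N_{0,w₀⁻¹w⁻¹}` and `t ∈ T₊`, setting
`b = u*t`, one has `U_w ∩ b·(N₀w₀B) = b·U_w` as subsets of `G`. -/
theorem stmt5 (p : ℕ) [Fact p.Prime] (n : ℕ) (hn : 2 ≤ n)
    (w w₀ : GL (Fin n) ℚ_[p]) (σ : Equiv.Perm (Fin n))
    (hw : ∀ i j : Fin n, (w : Matrix (Fin n) (Fin n) ℚ_[p]) i j = if i = σ j then 1 else 0)
    (hw₀ : ∀ i j : Fin n,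
      (w₀ : Matrix (Fin n) (Fin n) ℚ_[p]) i j = if i = Fin.rev j then 1 else 0)
    (B N N₀ T : Set (GL (Fin n) ℚ_[p]))
    (hB : B = {g : GL (Fin n) ℚ_[p] |
      ∀ i j : Fin n, j < i → (g : Matrix (Fin n) (Fin n) ℚ_[p]) i j = 0})
    (hN : N = {g : GL (Fin n) ℚ_[p] |
      (∀ i j : Fin n, j < i → (g : Matrix (Fin n) (Fin n) ℚ_[p]) i j = 0) ∧
      ∀ i : Fin n, (g : Matrix (Fin n) (Fin n) ℚ_[p]) i i = 1})
    (hN₀ : N₀ = N ∩ {g : GL (Fin n) ℚ_[p] |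
      ∀ i j : Fin n, ‖(g : Matrix (Fin n) (Fin n) ℚ_[p]) i j‖ ≤ 1})
    (hT : T = {g : GL (Fin n) ℚ_[p] |
      ∀ i j : Fin n, i ≠ j → (g : Matrix (Fin n) (Fin n) ℚ_[p]) i j = 0})
    (Uw : Set (GL (Fin n) ℚ_[p]))
    (hUw : Uw = (N₀ * {w₀} * B) \ ({w₀⁻¹ * w⁻¹} * (N * {w} * B))) :
    ∀ u ∈ N₀ ∩ ((fun x => (w₀⁻¹ * w⁻¹) * x * (w * w₀)) '' N₀),
      ∀ t ∈ {t ∈ T | ∀ x ∈ N₀, t * x * t⁻¹ ∈ N₀},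
        Uw ∩ ({u * t} * (N₀ * {w₀} * B)) = {u * t} * Uw := by
  subst hB hN hN₀ hT hUw
  exact fun u hu t ht ↦ stmt5_general (PadicInt.subring p).toSubsemiring
    (mem_normalizer_diagonalGL_of_perm hw)
    (mem_normalizer_diagonalGL_of_perm (σ := Fin.revPerm) hw₀)
    hu.1 (Set.image_mono Set.inter_subset_left hu.2) ht.1 ht.2
end

section
/- Fix a prime p and an integer n ≥ 2. Let N₀ be the group of upper triangular unipotent n×n matrices with entries in ℤ_p, and H_{Δ,0} := {u ∈ N₀ : u_{i,i+1} = 0 for all 1 ≤ i ≤ n−1} (a subgroup of N₀), with the topology induced by the p-adic topology on matrix entries. Fix j with 1 ≤ j ≤ n−1, for 1 ≤ i ≤ n−1 let t_i := diag(p,…,p,1,…,1) be the diagonal matrix whose first i diagonal entries equal p and whose remaining entries equal 1, and set s := ∏_{i ∈ {1,…,n−1}, i ≠ j} t_i (so s = diag(p^{c_1},…,p^{c_n}) with c_m = (n−m) − 1 if m ≤ j and c_m = n−m if m > j). Then the conjugate subgroups s^k H_{Δ,0} s^{−k}, k ≥ 0, form a fundamental system of open neighbourhoods of the identity in H_{Δ,0}: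 each s^k H_{Δ,0} s^{−k} is an open subgroup of H_{Δ,0}, and every neighbourhood of the identity in H_{Δ,0} contains s^k H_{Δ,0} s^{−k} for all sufficiently large k. -/
/-!
Let `r` be a strict order on the finite index set `ι` (a closed set of positive roots), `O` a
subring of `K`, and `J` the set of matrices with entries in `O` supported on `r`. Transitivity of
`r` makes `J` a non-unital ring, and irreflexivity makes its elements nilpotent, so the geometric
series shows that `1 + J` is a group.

Conjugation by `diagonal d` multiplies the `(i, l)` entry by `d i / d l`. It is a homeomorphism
preserving the shape of the matrices, so the conjugate of `1 + J` is cut out inside `1 + J` by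
pulling back the open condition that all entries lie in `O`. If `‖d i‖ < ‖d l‖` whenever `r i l`,
the factors `(d i / d l) ^ k` tend to `0`, and the conjugates by `diagonal d ^ k` shrink to `1`
since the entries are bounded.

The non-simple positive roots of `GL_n` are the pairs `i + 2 ≤ l`, and along these the exponent `c`
drops strictly, because omitting `t_j` from the product lowers the drop `l - i` by at most one.
-/

open Filter Matrix Topology

section OneAdd

variable {R : Type*} [Ring R] (J : NonUnitalSubring R)

/-- The multiplicative monoid `1 + J` of a non-unital subring `J`. -/
def oneAddSubmonoid : Submonoid R where
  carrier := {x | x - 1 ∈ J}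
  one_mem' := by simp only [Set.mem_ofPred_eq, sub_self, zero_mem]
  mul_mem' {x y} hx hy := by
    have expand : x * y - 1 = (x - 1) * (y - 1) + (x - 1) + (y - 1) := by noncomm_ring
    rw [Set.mem_ofPred_eq, expand]
    exact add_mem (add_mem (mul_mem hx hy) hx) hy

variable {J}

theorem mem_oneAddSubmonoid {x : R} : x ∈ oneAddSubmonoid J ↔ x - 1 ∈ J := Iff.rfl

theorem pow_succ_mem_nonUnitalSubring {a : R} (ha : a ∈ J) (k : ℕ) : a ^ (k + 1) ∈ J := by
  induction k with
  | zero => simpa only [zero_add, pow_one] using ha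
  | succ k ih => exact pow_succ a (k + 1) ▸ mul_mem ih ha

theorem exists_mul_eq_one_of_mem_oneAddSubmonoid {x : R} (hx : x ∈ oneAddSubmonoid J)
    (hnil : IsNilpotent (x - 1)) : ∃ y ∈ oneAddSubmonoid J, x * y = 1 := by
  obtain ⟨a, rfl⟩ : ∃ a, x = 1 - a := ⟨1 - x, (sub_sub_cancel 1 x).symm⟩
  simp only [mem_oneAddSubmonoid, sub_sub_cancel_left, neg_mem_iff, isNilpotent_neg_iff] at hx hnil
  obtain ⟨m, ham⟩ := hnil
  refine ⟨∑ k ∈ Finset.range (m + 1), a ^ k, ?_, ?_⟩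
  · rw [mem_oneAddSubmonoid, Finset.sum_range_succ', pow_zero, add_sub_cancel_right]
    exact sum_mem fun k _ => pow_succ_mem_nonUnitalSubring hx k
  · rw [mul_neg_geom_sum, pow_succ, ham, zero_mul, sub_zero]

end OneAdd

section Nilpotent

variable {ι R : Type*} [Fintype ι] [DecidableEq ι] [Semiring R] {r : ι → ι → Prop}
  [IsStrictOrder ι r] {x : Matrix ι ι R}

open scoped Classical in
/-- A nonzero entry of `x ^ k` comes from a chain of length `k` in the order `r`. -/
theorem le_card_filter_rel_of_pow_apply_ne_zero (hx : ∀ i l, ¬ r i l → x i l = 0) {k : ℕ}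
    {i l : ι} (hk : (x ^ k) i l ≠ 0) : k ≤ (Finset.univ.filter (r · l)).card := by
  induction k generalizing l with
  | zero => exact Nat.zero_le _
  | succ k ih =>
    rw [pow_succ, mul_apply] at hk
    obtain ⟨m, -, hm⟩ := Finset.exists_ne_zero_of_sum_ne_zero hk
    have hml : r m l := not_imp_comm.1 (hx m l) (right_ne_zero_of_mul hm)
    have below_ssubset : Finset.univ.filter (r · m) ⊂ Finset.univ.filter (r · l) := by
      refine Finset.ssubset_iff_of_subset (Finset.monotone_filter_right _ fun a _ ham =>
        _root_.trans ham hml) |>.2 ⟨m, ?_, ?_⟩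
      · simpa only [Finset.mem_filter_univ] using hml
      · simpa only [Finset.mem_filter_univ] using irrefl m
    exact (ih (left_ne_zero_of_mul hm)).trans_lt (Finset.card_lt_card below_ssubset)

theorem isNilpotent_of_strictOrder_support (hx : ∀ i l, ¬ r i l → x i l = 0) :
    IsNilpotent x := by
  classical
  refine ⟨Fintype.card ι + 1, Matrix.ext fun i l => ?_⟩
  by_contra hne
  have chain_le := le_card_filter_rel_of_pow_apply_ne_zero hx hne
  exact absurd (chain_le.trans (Finset.card_le_univ _)) (Nat.not_succ_le_self _)

end Nilpotent

section Pattern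

variable {ι R : Type*} [Fintype ι] [Ring R]

/-- The matrices with entries in `O` supported on the transitive relation `r`, as a ring without
unit. -/
def patternRing (r : ι → ι → Prop) [IsTrans ι r] (O : Subring R) :
    NonUnitalSubring (Matrix ι ι R) where
  carrier := {x | ∀ i l, x i l ∈ O ∧ (¬ r i l → x i l = 0)}
  zero_mem' _ _ := ⟨zero_mem O, fun _ => rfl⟩
  add_mem' hx hy i l := ⟨add_mem (hx i l).1 (hy i l).1, fun hil => by
    rw [Matrix.add_apply, (hx i l).2 hil, (hy i l).2 hil, add_zero]⟩
  neg_mem' hx i l := ⟨neg_mem (hx i l).1, fun hil => by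
    rw [Matrix.neg_apply, (hx i l).2 hil, neg_zero]⟩
  mul_mem' {x y} hx hy i l := by
    rw [mul_apply]
    refine ⟨sum_mem fun m _ => mul_mem (hx i m).1 (hy m l).1, fun hil =>
      Finset.sum_eq_zero fun m _ => ?_⟩
    by_cases him : r i m
    · rw [(hy m l).2 fun hml => hil (_root_.trans him hml), mul_zero]
    · rw [(hx i m).2 him, zero_mul]

variable [DecidableEq ι]

/-- The unipotent matrices over `O` whose off-diagonal entries are supported on `r`: the product of
the root subgroups over `O` of the roots in `r`. It lives in the monoid of all matrices over `R`;
its elements are invertible by `exists_mul_eq_one_of_mem_patternUnipotent`. -/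
def patternUnipotent (r : ι → ι → Prop) [IsTrans ι r] (O : Subring R) :
    Submonoid (Matrix ι ι R) :=
  oneAddSubmonoid (patternRing r O)

variable {r : ι → ι → Prop} {O : Subring R} {x : Matrix ι ι R}

theorem mem_patternUnipotent [IsStrictOrder ι r] : x ∈ patternUnipotent r O ↔
    (∀ i l, x i l ∈ O) ∧ (∀ i, x i i = 1) ∧ ∀ i l, i ≠ l → ¬ r i l → x i l = 0 := by
  change (∀ i l, (x - 1) i l ∈ O ∧ (¬ r i l → (x - 1) i l = 0)) ↔ _
  refine ⟨fun hx => ⟨fun i l => ?_, fun i => sub_eq_zero.1 ?_, fun i l hne hil => ?_⟩,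
    fun ⟨hO, hdiag, hoff⟩ i l => ?_⟩
  · have one_apply_mem : (1 : Matrix ι ι R) i l ∈ O := by
      rw [one_apply]; split_ifs <;> simp only [one_mem, zero_mem]
    simpa only [Matrix.sub_apply, sub_add_cancel] using add_mem (hx i l).1 one_apply_mem
  · simpa only [Matrix.sub_apply, one_apply_eq] using (hx i i).2 (irrefl i)
  · simpa only [Matrix.sub_apply, one_apply_ne hne, sub_zero] using (hx i l).2 hil
  · obtain rfl | hne := eq_or_ne i l
    · simp only [Matrix.sub_apply, one_apply_eq, hdiag, sub_self, zero_mem, implies_true, and_self]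
    · simpa only [Matrix.sub_apply, one_apply_ne hne, sub_zero] using ⟨hO i l, hoff i l hne⟩

theorem exists_mul_eq_one_of_mem_patternUnipotent [IsStrictOrder ι r]
    (hx : x ∈ patternUnipotent r O) : ∃ y ∈ patternUnipotent r O, x * y = 1 :=
  exists_mul_eq_one_of_mem_oneAddSubmonoid hx
    (isNilpotent_of_strictOrder_support fun i l => (hx i l).2)

end Pattern

section DiagConj

variable {ι K : Type*} [Fintype ι] [DecidableEq ι] [Field K] {d : ι → K}

/-- Conjugation by `diagonal d`. It is meaningful only if no `d i` vanishes: `d⁻¹` is the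
entrywise inverse, with `0⁻¹ = 0`. -/
def diagConj (d : ι → K) (x : Matrix ι ι K) : Matrix ι ι K :=
  diagonal d * x * diagonal d⁻¹

theorem diagConj_apply (d : ι → K) (x : Matrix ι ι K) (i l : ι) :
    diagConj d x i l = d i / d l * x i l := by
  rw [diagConj, mul_diagonal, diagonal_mul, Pi.inv_apply]
  ring

theorem diagConj_pow (d : ι → K) (k : ℕ) (x : Matrix ι ι K) :
    diagConj (d ^ k) x = diagonal d ^ k * x * diagonal d⁻¹ ^ k := by
  rw [diagConj, diagonal_pow, diagonal_pow, inv_pow]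

theorem diagConj_inv_diagConj (hd : ∀ i, d i ≠ 0) (x : Matrix ι ι K) :
    diagConj d⁻¹ (diagConj d x) = x := by
  ext i l
  simp only [diagConj_apply, Pi.inv_apply]
  field_simp [hd i, hd l]

theorem mem_image_diagConj_iff (hd : ∀ i, d i ≠ 0) {A : Set (Matrix ι ι K)} {y : Matrix ι ι K} :
    y ∈ diagConj d '' A ↔ diagConj d⁻¹ y ∈ A := by
  have diagConj_diagConj_inv (x : Matrix ι ι K) : diagConj d (diagConj d⁻¹ x) = x := by
    simpa only [inv_inv] using
      diagConj_inv_diagConj (d := d⁻¹) (fun i => inv_ne_zero (hd i)) x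
  exact Set.mem_image_iff_of_inverse (diagConj_inv_diagConj hd) diagConj_diagConj_inv

theorem diagConj_one (hd : ∀ i, d i ≠ 0) : diagConj d 1 = 1 := by
  rw [diagConj, mul_one, diagonal_mul_diagonal, ← diagonal_one]
  exact congrArg diagonal (funext fun i => mul_inv_cancel₀ (hd i))

theorem diagConj_mul (hd : ∀ i, d i ≠ 0) (x y : Matrix ι ι K) :
    diagConj d (x * y) = diagConj d x * diagConj d y := by
  ext i l
  simp only [mul_apply, diagConj_apply, Finset.mul_sum]
  refine Finset.sum_congr rfl fun m _ => ?_
  field_simp [hd m]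

variable {r : ι → ι → Prop} [IsStrictOrder ι r] {O : Subring K} {x : Matrix ι ι K}

theorem inv_mem_image_diagConj (hd : ∀ i, d i ≠ 0)
    (hx : x ∈ diagConj d '' (patternUnipotent r O : Set (Matrix ι ι K))) :
    x⁻¹ ∈ diagConj d '' (patternUnipotent r O : Set (Matrix ι ι K)) := by
  obtain ⟨u, hu, rfl⟩ := hx
  obtain ⟨v, hv, huv⟩ := exists_mul_eq_one_of_mem_patternUnipotent hu
  refine ⟨v, hv, (inv_eq_right_inv ?_).symm⟩
  rw [← diagConj_mul hd, huv, diagConj_one hd]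

theorem diagConj_mem_patternUnipotent_iff (hd : ∀ i, d i ≠ 0) (hx : x ∈ patternUnipotent r O) :
    diagConj d x ∈ patternUnipotent r O ↔ ∀ i l, diagConj d x i l ∈ O := by
  obtain ⟨-, hdiag, hoff⟩ := mem_patternUnipotent.1 hx
  refine ⟨fun h => (mem_patternUnipotent.1 h).1, fun hO =>
    mem_patternUnipotent.2 ⟨hO, fun i => ?_, fun i l hne hil => ?_⟩⟩
  · rw [diagConj_apply, hdiag, mul_one, div_self (hd i)]
  · rw [diagConj_apply, hoff i l hne hil, mul_zero]

theorem diagConj_mem_patternUnipotent (hd : ∀ i, d i ≠ 0) (hdO : ∀ i l, r i l → d i / d l ∈ O)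
    (hx : x ∈ patternUnipotent r O) : diagConj d x ∈ patternUnipotent r O := by
  rw [diagConj_mem_patternUnipotent_iff hd hx]
  obtain ⟨hO, -, hoff⟩ := mem_patternUnipotent.1 hx
  intro i l
  rw [diagConj_apply]
  obtain rfl | hne := eq_or_ne i l
  · rw [div_self (hd i), one_mul]
    exact hO i i
  by_cases hil : r i l
  · exact mul_mem (hdO i l hil) (hO i l)
  · rw [hoff i l hne hil, mul_zero]
    exact zero_mem O

end DiagConj

section Topology

variable {ι K : Type*} [Fintype ι] [DecidableEq ι] {r : ι → ι → Prop} [IsStrictOrder ι r]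
  {d : ι → K}

theorem image_diagConj_mem_nhdsWithin [Field K] [TopologicalSpace K] [IsTopologicalSemiring K]
    {O : Subring K} (hO : IsOpen (O : Set K)) (hd : ∀ i, d i ≠ 0) {x : Matrix ι ι K}
    (hx : x ∈ diagConj d '' (patternUnipotent r O : Set (Matrix ι ι K))) :
    diagConj d '' (patternUnipotent r O : Set (Matrix ι ι K)) ∈
      𝓝[(patternUnipotent r O : Set (Matrix ι ι K))] x := by
  have hcont : Continuous (diagConj d⁻¹) := by
    unfold diagConj
    fun_prop
  rw [mem_image_diagConj_iff hd] at hx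
  refine mem_nhdsWithin.2 ⟨diagConj d⁻¹ ⁻¹' (O : Set K).matrix, hO.matrix.preimage hcont,
    (mem_patternUnipotent.1 hx).1, fun y ⟨hyO, hy⟩ => (mem_image_diagConj_iff hd).2 ?_⟩
  exact (diagConj_mem_patternUnipotent_iff (fun i => inv_ne_zero (hd i)) hy).2 hyO

theorem tendsto_diagConj_pow_apply_one [NormedField K] {O : Subring K}
    (hO : Bornology.IsBounded (O : Set K)) (hd : ∀ i, d i ≠ 0)
    (hlt : ∀ i l, r i l → ‖d i‖ < ‖d l‖) (i l : ι) :
    Tendsto (fun a : ℕ × Matrix ι ι K => diagConj (d ^ a.1) a.2 i l)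
      (atTop ×ˢ 𝓟 (patternUnipotent r O : Set (Matrix ι ι K)))
      (𝓝 ((1 : Matrix ι ι K) i l)) := by
  have on_pattern : ∀ᶠ a : ℕ × Matrix ι ι K in
      atTop ×ˢ 𝓟 (patternUnipotent r O : Set (Matrix ι ι K)), a.2 ∈ patternUnipotent r O :=
    eventually_prod_principal_iff.2 (Eventually.of_forall fun _ _ hx => hx)
  simp only [diagConj_apply, Pi.pow_apply, ← div_pow]
  by_cases hil : r i l
  · rw [one_apply_ne (ne_of_irrefl hil)]
    obtain ⟨C, hC⟩ := hO.exists_norm_le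
    have ratio_tendsto : Tendsto (fun k : ℕ => (d i / d l) ^ k) atTop (𝓝 0) := by
      refine tendsto_pow_atTop_nhds_zero_of_norm_lt_one ?_
      rw [norm_div, div_lt_one (norm_pos_iff.2 (hd l))]
      exact hlt i l hil
    refine (ratio_tendsto.comp tendsto_fst).zero_mul_isBoundedUnder_le
      (isBoundedUnder_of_eventually_le (a := C) ?_)
    exact on_pattern.mono fun a ha => hC _ ((mem_patternUnipotent.1 ha).1 i l)
  · refine tendsto_const_nhds.congr' (on_pattern.mono fun a ha => ?_)
    obtain ⟨-, hdiag, hoff⟩ := mem_patternUnipotent.1 ha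
    beta_reduce
    obtain rfl | hne := eq_or_ne i l
    · rw [one_apply_eq, hdiag, div_self (hd i), one_pow, one_mul]
    · rw [one_apply_ne hne, hoff i l hne hil, mul_zero]

theorem eventually_image_diagConj_pow_subset [NormedField K] {O : Subring K}
    (hO : Bornology.IsBounded (O : Set K)) (hd : ∀ i, d i ≠ 0)
    (hlt : ∀ i l, r i l → ‖d i‖ < ‖d l‖) {V : Set (Matrix ι ι K)} (hV : V ∈ 𝓝 1) :
    ∀ᶠ k : ℕ in atTop, diagConj (d ^ k) '' (patternUnipotent r O : Set (Matrix ι ι K)) ⊆ V := by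
  have tendsto_one : Tendsto (fun a : ℕ × Matrix ι ι K => diagConj (d ^ a.1) a.2)
      (atTop ×ˢ 𝓟 (patternUnipotent r O : Set (Matrix ι ι K))) (𝓝 1) :=
    tendsto_pi_nhds.2 fun i => tendsto_pi_nhds.2 fun l =>
      tendsto_diagConj_pow_apply_one hO hd hlt i l
  exact (eventually_prod_principal_iff.1 (tendsto_one hV)).mono fun _ => Set.image_subset_iff.2

end Topology

section Ultrametric

variable {K : Type*} [NormedField K] [IsUltrametricDist K]

theorem mem_integer_iff_norm_le_one {a : K} :
    a ∈ (NormedField.valuation (K := K)).integer ↔ ‖a‖ ≤ 1 := Iff.rfl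

theorem coe_integer_eq_closedBall :
    ((NormedField.valuation (K := K)).integer : Set K) = Metric.closedBall 0 1 :=
  Set.ext fun _ => mem_integer_iff_norm_le_one.trans mem_closedBall_zero_iff.symm

theorem isOpen_integer :
    IsOpen ((NormedField.valuation (K := K)).integer : Set K) :=
  coe_integer_eq_closedBall (K := K) ▸ IsUltrametricDist.isOpen_closedBall 0 one_ne_zero

theorem isBounded_integer :
    Bornology.IsBounded ((NormedField.valuation (K := K)).integer : Set K) :=
  coe_integer_eq_closedBall (K := K) ▸ Metric.isBounded_closedBall

variable {ι : Type*} [Fintype ι] [DecidableEq ι]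

theorem image_diagConj_pow_subset_patternUnipotent {r : ι → ι → Prop} [IsStrictOrder ι r]
    {d : ι → K} (hd : ∀ i, d i ≠ 0) (hle : ∀ i l, r i l → ‖d i‖ ≤ ‖d l‖) (k : ℕ) :
    diagConj (d ^ k) '' (patternUnipotent r (NormedField.valuation (K := K)).integer) ⊆
      (patternUnipotent r (NormedField.valuation (K := K)).integer : Set (Matrix ι ι K)) := by
  refine Set.image_subset_iff.2 fun x hx =>
    diagConj_mem_patternUnipotent (fun i => pow_ne_zero k (hd i)) (fun i l hil => ?_) hx
  rw [mem_integer_iff_norm_le_one, Pi.pow_apply, Pi.pow_apply, ← div_pow, norm_pow, norm_div]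
  exact pow_le_one₀ (by positivity) (div_le_one_of_le₀ (hle i l hil) (norm_nonneg _))

theorem stmt6_general (r : ι → ι → Prop) [IsStrictOrder ι r] (d : ι → K) (hd : ∀ i, d i ≠ 0)
    (hlt : ∀ i l, r i l → ‖d i‖ < ‖d l‖) (H : Set (Matrix ι ι K))
    (hH : H = patternUnipotent r (NormedField.valuation (K := K)).integer)
    (S : ℕ → Set (Matrix ι ι K))
    (hS : ∀ k, S k = (fun x => diagonal d ^ k * x * diagonal d⁻¹ ^ k) '' H) :
    (∀ k, S k ⊆ H) ∧ (∀ k, 1 ∈ S k) ∧ (∀ k, ∀ x ∈ S k, ∀ y ∈ S k, x * y ∈ S k) ∧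
    (∀ k, ∀ x ∈ S k, x⁻¹ ∈ S k) ∧ (∀ k, ∀ x ∈ S k, S k ∈ 𝓝[H] x) ∧
    (∀ V ∈ 𝓝[H] (1 : Matrix ι ι K), ∃ k₀, ∀ k ≥ k₀, S k ⊆ V) := by
  have hdk (k : ℕ) (i : ι) : (d ^ k) i ≠ 0 := pow_ne_zero k (hd i)
  obtain rfl : S = fun k => diagConj (d ^ k) '' H :=
    funext fun k => (hS k).trans (Set.image_congr' fun x => (diagConj_pow d k x).symm)
  subst hH
  have hsub := image_diagConj_pow_subset_patternUnipotent hd fun i l hil => (hlt i l hil).le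
  refine ⟨hsub, fun k => ⟨1, one_mem _, diagConj_one (hdk k)⟩, ?_,
    fun k x => inv_mem_image_diagConj (hdk k),
    fun k x => image_diagConj_mem_nhdsWithin isOpen_integer (hdk k), ?_⟩
  · rintro k _ ⟨x, hx, rfl⟩ _ ⟨y, hy, rfl⟩
    exact ⟨x * y, mul_mem hx hy, diagConj_mul (hdk k) x y⟩
  · intro V hV
    obtain ⟨U, hU, hUV⟩ := mem_nhdsWithin_iff_exists_mem_nhds_inter.1 hV
    obtain ⟨k₀, hk₀⟩ := eventually_atTop.1
      (eventually_image_diagConj_pow_subset isBounded_integer hd hlt hU)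
    exact ⟨k₀, fun k hk => (Set.subset_inter (hk₀ k hk) (hsub k)).trans hUV⟩

end Ultrametric

section NonSimpleRoot

/-- The non-simple positive roots of `GL_n`, the root `e_i - e_l` being encoded as `(i, l)`. -/
def NonSimpleRoot (n : ℕ) (i l : Fin n) : Prop := (i : ℕ) + 2 ≤ l

instance (n : ℕ) : IsStrictOrder (Fin n) (NonSimpleRoot n) where
  irrefl i := by unfold NonSimpleRoot; lia
  trans i l m := by unfold NonSimpleRoot; lia

theorem coe_patternUnipotent_nonSimpleRoot {R : Type*} [Ring R] (O : Subring R) (n : ℕ) :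
    (patternUnipotent (NonSimpleRoot n) O : Set (Matrix (Fin n) (Fin n) R)) =
      {u | (∀ i l : Fin n, l < i → u i l = 0) ∧ (∀ i : Fin n, u i i = 1) ∧
        (∀ i l : Fin n, u i l ∈ O) ∧ ∀ i l : Fin n, (l : ℕ) = (i : ℕ) + 1 → u i l = 0} := by
  ext u
  rw [SetLike.mem_coe, mem_patternUnipotent]
  constructor
  · rintro ⟨hO, hdiag, hoff⟩
    refine ⟨fun i l hil => hoff i l ?_ ?_, hdiag, hO, fun i l hil => hoff i l ?_ ?_⟩ <;>
      grind [NonSimpleRoot]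
  · rintro ⟨hlower, hdiag, hO, hsuper⟩
    refine ⟨hO, hdiag, fun i l hne hil => ?_⟩
    obtain hlt | heq : l < i ∨ (l : ℕ) = i + 1 := by unfold NonSimpleRoot at hil; lia
    exacts [hlower i l hlt, hsuper i l heq]

theorem exponent_lt_of_nonSimpleRoot {n j : ℕ} {c : Fin n → ℕ}
    (hc : ∀ m : Fin n, c m =
      if (m : ℕ) + 1 ≤ j then n - ((m : ℕ) + 1) - 1 else n - ((m : ℕ) + 1))
    {i l : Fin n} (hil : NonSimpleRoot n i l) : c l < c i := by
  unfold NonSimpleRoot at hil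
  rw [hc, hc]
  split_ifs <;> lia

end NonSimpleRoot

/-- Fix a prime `p` and `n ≥ 2`.  Let `H = H_{Δ,0}` be the group of upper triangular unipotent
`n × n` matrices with entries in `ℤ_p` (realized inside the `ℚ_p`-matrices via the norm
condition `‖·‖ ≤ 1`) whose superdiagonal entries vanish, with the topology induced by the
`p`-adic topology on matrix entries.  Fix `1 ≤ j ≤ n-1` and let
`s = diag(p^{c_1}, …, p^{c_n})` with `c_m = (n-m)-1` if `m ≤ j` and `c_m = n-m` otherwise
(`1`-indexed), i.e. `s = ∏_{i ≠ j} t_i`.  Then the conjugates `S k = s^k H s^{-k}` form a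
fundamental system of open neighbourhoods of `1` in `H`: each `S k` is an open subgroup of `H`
(it is contained in `H`, contains `1`, is closed under multiplication and inversion, and is a
neighbourhood within `H` of each of its points), and every neighbourhood of `1` in `H` contains
`S k` for all sufficiently large `k`. -/
theorem stmt6 (p : ℕ) [Fact p.Prime] (n : ℕ) (hn : 2 ≤ n)
    (j : ℕ) (hj1 : 1 ≤ j) (hj2 : j ≤ n - 1)
    (c : Fin n → ℕ)
    (hc : ∀ m : Fin n, c m =
      if (m : ℕ) + 1 ≤ j then n - ((m : ℕ) + 1) - 1 else n - ((m : ℕ) + 1))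
    (s sInv : Matrix (Fin n) (Fin n) ℚ_[p])
    (hs : s = Matrix.diagonal fun m => (p : ℚ_[p]) ^ c m)
    (hsInv : sInv = Matrix.diagonal fun m => ((p : ℚ_[p]) ^ c m)⁻¹)
    (H : Set (Matrix (Fin n) (Fin n) ℚ_[p]))
    (hH : H = {u | (∀ i l : Fin n, l < i → u i l = 0) ∧ (∀ i : Fin n, u i i = 1) ∧
      (∀ i l : Fin n, ‖u i l‖ ≤ 1) ∧
      ∀ i l : Fin n, (l : ℕ) = (i : ℕ) + 1 → u i l = 0})
    (S : ℕ → Set (Matrix (Fin n) (Fin n) ℚ_[p]))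
    (hS : ∀ k : ℕ, S k = (fun x => s ^ k * x * sInv ^ k) '' H) :
    (∀ k : ℕ, S k ⊆ H) ∧
    (∀ k : ℕ, (1 : Matrix (Fin n) (Fin n) ℚ_[p]) ∈ S k) ∧
    (∀ k : ℕ, ∀ x ∈ S k, ∀ y ∈ S k, x * y ∈ S k) ∧
    (∀ k : ℕ, ∀ x ∈ S k, x⁻¹ ∈ S k) ∧
    (∀ k : ℕ, ∀ x ∈ S k, S k ∈ nhdsWithin x H) ∧
    (∀ V ∈ nhdsWithin (1 : Matrix (Fin n) (Fin n) ℚ_[p]) H, ∃ k₀ : ℕ, ∀ k ≥ k₀, S k ⊆ V) := by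
  subst hs hsInv
  have hp0 : (p : ℚ_[p]) ≠ 0 := Nat.cast_ne_zero.2 (Fact.out : p.Prime).ne_zero
  refine stmt6_general (NonSimpleRoot n) _ (fun m => pow_ne_zero (c m) hp0) (fun i l hil => ?_) H
    (by rw [coe_patternUnipotent_nonSimpleRoot, hH]; rfl) S hS
  rw [norm_pow, norm_pow]
  exact pow_lt_pow_right_of_lt_one₀ (norm_pos_iff.2 hp0) Padic.norm_p_lt_one
    (exponent_lt_of_nonSimpleRoot hc hil)
end
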